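/- Let (θ_j)_{j≥1} be a sequence of real numbers in (1,2), each univoque, converging to θ ∈ (1,2). Then the greedy θ-expansion of 1, d_θ(1), satisfies: either d_θ(1) is strictly self-bracketed (so θ is univoque), or d_θ(1) is finite, say of the form w10^∞, and (w0)^∞ is a periodic self-bracketed sequence. -/

import Mathlib

/-!
The greedy remainders of `1` in a univoque base `β` never enter the switch region, where both
digits could be chosen next, and therefore stay in `[1/(β-1) - 1, 1]`. These orbits live in a
compact space and the conditions on them are closed, so a limit `θ` inherits an orbit of `1` with
remainders in `[1/(θ-1) - 1, 1]`; comparing remainders shows that its digits are self-bracketed.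
If the orbit never returns to `1`, it is the greedy one and all the inequalities are strict. If it
first returns to `1` at time `m + 1`, then the greedy expansion ends there, with a `1` in place of
the digit `0` of the orbit, and repeating the loop of length `m + 1` forever gives the periodic
sequence.
-/

noncomputable def greedyRem (β : ℝ) : ℕ → ℝ
  | 0 => 1
  | n + 1 => Int.fract (β * greedyRem β n)

noncomputable def greedyDigit (β : ℝ) (n : ℕ) : ℕ := ⌊β * greedyRem β n⌋₊

def shiftSeq (s : ℕ → ℕ) (k : ℕ) : ℕ → ℕ := fun n => s (n + k)

def complSeq (s : ℕ → ℕ) : ℕ → ℕ := fun n => 1 - s n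

def lexLt (a b : ℕ → ℕ) : Prop := ∃ n, (∀ m, m < n → a m = b m) ∧ a n < b n

def lexLe (a b : ℕ → ℕ) : Prop := lexLt a b ∨ a = b

def selfBracketed (s : ℕ → ℕ) : Prop :=
  ∀ k, 1 ≤ k → lexLe (complSeq s) (shiftSeq s k) ∧ lexLe (shiftSeq s k) s

/-- Strictly self-bracketed sequences. -/
def strictlySelfBracketed (s : ℕ → ℕ) : Prop :=
  ∀ k, 1 ≤ k → lexLt (complSeq s) (shiftSeq s k) ∧ lexLt (shiftSeq s k) s

/-- Periodic self-bracketed: self-bracketed with one of the inequalities an equality. -/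
def periodicSelfBracketed (s : ℕ → ℕ) : Prop :=
  selfBracketed s ∧ ∃ k, 1 ≤ k ∧ (shiftSeq s k = s ∨ shiftSeq s k = complSeq s)

/-- β ∈ (1,2) is univoque: 1 has a unique binary β-representation. -/
def Univoque (β : ℝ) : Prop :=
  ∃! s : ℕ → ℕ, (∀ n, s n ≤ 1) ∧ ∑' n : ℕ, (s n : ℝ) / β ^ (n + 1) = 1

open Filter Set Topology

theorem lexLt_trichotomy (s t : ℕ → ℕ) : lexLt s t ∨ s = t ∨ lexLt t s :=
  lt_trichotomy (toLex s) (toLex t)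

theorem complSeq_complSeq {s : ℕ → ℕ} (hs : ∀ n, s n ≤ 1) : complSeq (complSeq s) = s :=
  funext fun n => Nat.sub_sub_self (hs n)

theorem shiftSeq_add_self_of_eq_complSeq {s : ℕ → ℕ} (hs : ∀ n, s n ≤ 1) {k : ℕ}
    (h : shiftSeq s k = complSeq s) : shiftSeq s (k + k) = s :=
  calc shiftSeq s (k + k) = shiftSeq (shiftSeq s k) k := by simp [funext_iff, shiftSeq, add_assoc]
    _ = complSeq (shiftSeq s k) := congrArg (shiftSeq · k) h
    _ = s := by rw [h, complSeq_complSeq hs]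

/-- `r` is a sequence of remainders for the digits `s` in base `β`: reading off the digits of the
number `r 0` one after the other leaves `r n` after `n` steps. -/
def IsRemainderSeq (β : ℝ) (s : ℕ → ℕ) (r : ℕ → ℝ) : Prop :=
  ∀ n, r (n + 1) = β * r n - s n

namespace IsRemainderSeq

variable {β : ℝ} {s t : ℕ → ℕ} {r q : ℕ → ℝ}

theorem shift (h : IsRemainderSeq β s r) (k : ℕ) :
    IsRemainderSeq β (shiftSeq s k) (fun n => r (n + k)) := fun n => by
  simp only [shiftSeq, ← h (n + k), add_right_comm]

theorem compl (h : IsRemainderSeq β s r) (hβ : β ≠ 1) (hs : ∀ n, s n ≤ 1) :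
    IsRemainderSeq β (complSeq s) (fun n => (β - 1)⁻¹ - r n) := fun n => by
  have : β - 1 ≠ 0 := sub_ne_zero.2 hβ
  simp only [complSeq, h n, Nat.cast_sub (hs n), Nat.cast_one]
  field_simp
  ring

theorem periodize (h : IsRemainderSeq β s r) {p : ℕ} (hp : 0 < p) (hr : r p = r 0) :
    IsRemainderSeq β (fun n => s (n % p)) (fun n => r (n % p)) := fun n => by
  have hsucc : r ((n + 1) % p) = r (n % p + 1) := by
    rw [← Nat.mod_add_mod]
    have hle : n % p + 1 ≤ p := Nat.mod_lt n hp
    rcases hle.lt_or_eq with hlt | heq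
    · rw [Nat.mod_eq_of_lt hlt]
    · rw [heq, Nat.mod_self, hr]
  simp only [hsucc, h (n % p)]

theorem sub_eq_pow_mul (hr : IsRemainderSeq β s r) (hq : IsRemainderSeq β t q) {n : ℕ}
    (h : ∀ m < n, s m = t m) : r n - q n = β ^ n * (r 0 - q 0) := by
  induction n with
  | zero => simp
  | succ n ih =>
    rw [hr, hq, h n n.lt_succ_self, pow_succ]
    linear_combination β * ih fun m hm => h m (hm.trans n.lt_succ_self)

theorem lexLe_of_le (hr : IsRemainderSeq β s r) (hq : IsRemainderSeq β t q) (hβ : 0 ≤ β)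
    (hr_pos : ∀ n, 0 < r n) (hq_le : ∀ n, q n ≤ 1) (h : r 0 ≤ q 0) : lexLe s t := by
  rcases lexLt_trichotomy s t with hlt | heq | ⟨n, hpre, hn⟩
  · exact Or.inl hlt
  · exact Or.inr heq
  · have hle : r n ≤ q n := sub_nonpos.1 <| by
      rw [hr.sub_eq_pow_mul hq fun m hm => (hpre m hm).symm]
      exact mul_nonpos_of_nonneg_of_nonpos (pow_nonneg hβ n) (sub_nonpos.2 h)
    have hdigit : (t n : ℝ) + 1 ≤ s n := mod_cast hn
    have hnonpos : r (n + 1) ≤ 0 :=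
      calc r (n + 1) = β * r n - s n := hr n
        _ ≤ β * q n - (t n + 1) := sub_le_sub (mul_le_mul_of_nonneg_left hle hβ) hdigit
        _ = q (n + 1) - 1 := by rw [hq n]; ring
        _ ≤ 0 := sub_nonpos.2 (hq_le _)
    exact absurd hnonpos (hr_pos _).not_ge

theorem sum_range_digits (h : IsRemainderSeq β s r) (hβ : β ≠ 0) (n : ℕ) :
    ∑ i ∈ Finset.range n, (s i : ℝ) / β ^ (i + 1) = r 0 - r n / β ^ n := by
  induction n with
  | zero => simp
  | succ n ih =>
    rw [Finset.sum_range_succ, ih, h n]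
    field_simp
    ring

theorem hasSum (h : IsRemainderSeq β s r) (hβ : 1 < β) {a b : ℝ} (hr : ∀ n, r n ∈ Icc a b) :
    HasSum (fun n => (s n : ℝ) / β ^ (n + 1)) (r 0) := by
  have hβ0 : 0 < β := zero_lt_one.trans hβ
  have hdiv (c : ℝ) : Tendsto (fun n : ℕ => c / β ^ n) atTop (𝓝 0) :=
    tendsto_const_nhds.div_atTop (tendsto_pow_atTop_atTop_of_one_lt hβ)
  have hzero : Tendsto (fun n => r n / β ^ n) atTop (𝓝 0) :=
    tendsto_of_tendsto_of_tendsto_of_le_of_le (hdiv a) (hdiv b)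
      (fun n => div_le_div_of_nonneg_right (hr n).1 (pow_pos hβ0 n).le)
      (fun n => div_le_div_of_nonneg_right (hr n).2 (pow_pos hβ0 n).le)
  rw [hasSum_iff_tendsto_nat_of_nonneg fun n => by positivity]
  simpa only [h.sum_range_digits hβ0.ne', sub_zero] using hzero.const_sub (r 0)

end IsRemainderSeq

/-- `s` is a sequence of binary digits that represents `x` in base `β`; the digit `s n` has weight
`β ^ (-(n + 1))`. -/
def IsExpansion (β x : ℝ) (s : ℕ → ℕ) : Prop :=
  (∀ n, s n ≤ 1) ∧ HasSum (fun n => (s n : ℝ) / β ^ (n + 1)) x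

section Expansions

variable {β x : ℝ}

theorem IsExpansion.cons {d : ℕ} {s : ℕ → ℕ} (h : IsExpansion β (β * x - d) s) (hβ : β ≠ 0)
    (hd : d ≤ 1) : IsExpansion β x (fun n => n.casesOn d s) := by
  refine ⟨fun n => by cases n <;> simp [hd, h.1], ?_⟩
  rw [← hasSum_nat_add_iff' 1]
  have hhead : (β * x - d) / β = x - d / β := by field_simp
  simpa [pow_succ, div_div, hhead] using h.2.div_const β

theorem exists_isExpansion (hβ : 1 < β) (hβ2 : β ≤ 2) (hx : x ∈ Icc 0 (β - 1)⁻¹) :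
    ∃ s, IsExpansion β x s := by
  have hfix : β * (β - 1)⁻¹ = (β - 1)⁻¹ + 1 := by
    have : β - 1 ≠ 0 := (sub_pos.2 hβ).ne'
    field_simp
    ring
  have hone : 1 ≤ (β - 1)⁻¹ := (one_le_inv₀ (sub_pos.2 hβ)).2 (by linarith)
  have hdigit (y : Icc 0 (β - 1)⁻¹) : ∃ d : ℕ, d ≤ 1 ∧ β * y - d ∈ Icc 0 (β - 1)⁻¹ := by
    have hle : β * y ≤ β * (β - 1)⁻¹ := mul_le_mul_of_nonneg_left y.2.2 (by linarith)
    have hnonneg : 0 ≤ β * y := mul_nonneg (by linarith) y.2.1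
    rcases le_total (β * y) 1 with h | h
    · exact ⟨0, zero_le_one, by push_cast; constructor <;> linarith⟩
    · exact ⟨1, le_rfl, by push_cast; constructor <;> linarith⟩
  choose d hd hmem using hdigit
  let r (n : ℕ) : Icc 0 (β - 1)⁻¹ := (fun y => ⟨β * y - d y, hmem y⟩)^[n] ⟨x, hx⟩
  have hr : IsRemainderSeq β (fun n => d (r n)) (fun n => r n) := fun n => by
    simp only [r, Function.iterate_succ_apply']
  exact ⟨fun n => d (r n), fun n => hd (r n), hr.hasSum hβ fun n => (r n).2⟩

theorem Univoque.subsingleton_isExpansion (h : Univoque β) :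
    {s | IsExpansion β 1 s}.Subsingleton :=
  fun _ hs _ ht => h.unique ⟨hs.1, hs.2.tsum_eq⟩ ⟨ht.1, ht.2.tsum_eq⟩

theorem subsingleton_isExpansion_mul_sub (h : {s | IsExpansion β x s}.Subsingleton) (hβ : β ≠ 0)
    {d : ℕ} (hd : d ≤ 1) : {s | IsExpansion β (β * x - d) s}.Subsingleton :=
  fun _ hs _ ht => funext fun n => congrFun (h (hs.cons hβ hd) (ht.cons hβ hd)) (n + 1)

theorem mul_notMem_Icc_of_subsingleton_isExpansion (hβ : 1 < β) (hβ2 : β ≤ 2)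
    (h : {s | IsExpansion β x s}.Subsingleton) : β * x ∉ Icc 1 (β - 1)⁻¹ := by
  intro hx
  have hβ0 : β ≠ 0 := by positivity
  obtain ⟨s, hs⟩ : ∃ s, IsExpansion β (β * x - (0 : ℕ)) s :=
    exists_isExpansion hβ hβ2 (by push_cast; constructor <;> linarith [hx.1, hx.2])
  obtain ⟨t, ht⟩ : ∃ t, IsExpansion β (β * x - (1 : ℕ)) t :=
    exists_isExpansion hβ hβ2 (by push_cast; constructor <;> linarith [hx.1, hx.2])
  exact zero_ne_one (congrFun (h (hs.cons hβ0 zero_le_one) (ht.cons hβ0 le_rfl)) 0)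

end Expansions

section Greedy

variable {β : ℝ}

theorem greedyRem_mem_Icc (β : ℝ) : ∀ n, greedyRem β n ∈ Icc 0 1
  | 0 => ⟨zero_le_one, le_rfl⟩
  | _ + 1 => ⟨Int.fract_nonneg _, (Int.fract_lt_one _).le⟩

theorem isRemainderSeq_greedy (hβ : 0 ≤ β) :
    IsRemainderSeq β (greedyDigit β) (greedyRem β) := fun n => by
  rw [greedyDigit, natCast_floor_eq_intCast_floor (mul_nonneg hβ (greedyRem_mem_Icc β n).1)]
  rfl

theorem greedyDigit_le_one (hβ : 0 ≤ β) (hβ2 : β < 2) (n : ℕ) : greedyDigit β n ≤ 1 := by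
  obtain ⟨hnonneg, hle⟩ := greedyRem_mem_Icc β n
  refine Nat.lt_succ_iff.1 <| (Nat.floor_lt (mul_nonneg hβ hnonneg)).2 ?_
  exact (mul_le_of_le_one_right hβ hle).trans_lt (by simpa using hβ2)

theorem greedyRem_eq_zero_of_le {m n : ℕ} (hm : greedyRem β m = 0) (hmn : m ≤ n) :
    greedyRem β n = 0 := by
  induction n, hmn using Nat.le_induction with
  | base => exact hm
  | succ n _ ih => simp [greedyRem, ih]

theorem IsRemainderSeq.greedyRem_eq {s : ℕ → ℕ} {r : ℕ → ℝ} (h : IsRemainderSeq β s r)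
    (h0 : r 0 = 1) {m : ℕ} (hr : ∀ n < m, r (n + 1) ∈ Ico 0 1) : greedyRem β m = r m := by
  induction m with
  | zero => exact h0.symm
  | succ m ih =>
    have hsplit : β * r m = r (m + 1) + s m := by rw [h m]; ring
    rw [greedyRem, ih fun n hn => hr n (hn.trans m.lt_succ_self), hsplit, Int.fract_add_natCast]
    exact Int.fract_eq_self.2 (hr m m.lt_succ_self)

theorem IsRemainderSeq.greedyDigit_eq {s : ℕ → ℕ} {r : ℕ → ℝ} (h : IsRemainderSeq β s r)
    (hβ : 0 ≤ β) (h0 : r 0 = 1) {m : ℕ} (hr : ∀ n ≤ m, r (n + 1) ∈ Ico 0 1) :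
    greedyDigit β m = s m := by
  have hm : greedyRem β m = r m := h.greedyRem_eq h0 fun n hn => hr n hn.le
  have hsucc : greedyRem β (m + 1) = r (m + 1) :=
    h.greedyRem_eq h0 fun n hn => hr n (Nat.lt_succ_iff.1 hn)
  have hgreedy := isRemainderSeq_greedy hβ m
  rw [hm, hsucc, h m] at hgreedy
  exact_mod_cast (sub_right_injective hgreedy).symm

theorem Univoque.subsingleton_isExpansion_greedyRem (hu : Univoque β) (hβ : 0 < β) (hβ2 : β < 2)
    (n : ℕ) : {s | IsExpansion β (greedyRem β n) s}.Subsingleton := by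
  induction n with
  | zero => exact hu.subsingleton_isExpansion
  | succ n ih =>
    rw [isRemainderSeq_greedy hβ.le]
    exact subsingleton_isExpansion_mul_sub ih hβ.ne' (greedyDigit_le_one hβ.le hβ2 n)

theorem Univoque.inv_sub_one_le_greedyRem (hu : Univoque β) (hβ : 1 < β) (hβ2 : β < 2) (n : ℕ) :
    (β - 1)⁻¹ - 1 ≤ greedyRem β n := by
  have hβ0 : 0 < β := zero_lt_one.trans hβ
  have hswitch (n : ℕ) (hn : 1 ≤ β * greedyRem β n) : (β - 1)⁻¹ < β * greedyRem β n := by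
    by_contra! hle
    exact mul_notMem_Icc_of_subsingleton_isExpansion hβ hβ2.le
      (hu.subsingleton_isExpansion_greedyRem hβ0 hβ2 n) ⟨hn, hle⟩
  induction n with
  | zero =>
    have := hswitch 0
    simp only [greedyRem, mul_one] at this ⊢
    linarith [this hβ.le]
  | succ n ih =>
    have hstep := isRemainderSeq_greedy hβ0.le n
    rcases Nat.le_one_iff_eq_zero_or_eq_one.1 (greedyDigit_le_one hβ0.le hβ2 n) with hd | hd
    · rw [hd, Nat.cast_zero, sub_zero] at hstep
      exact ih.trans (hstep ▸ le_mul_of_one_le_left (greedyRem_mem_Icc β n).1 hβ.le)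
    · rw [hd, Nat.cast_one] at hstep
      linarith [hswitch n (by linarith [(greedyRem_mem_Icc β (n + 1)).1])]

end Greedy

/-- `r` is an orbit of remainders of `1` in base `θ`, with digits `s`, that stays in the interval
`[1/(θ-1) - 1, 1]`. The interval is closed, so that, unlike univoque expansions, such orbits survive
limits of the base. -/
structure BracketedOrbit (θ : ℝ) (s : ℕ → ℕ) (r : ℕ → ℝ) : Prop where
  isRemainderSeq : IsRemainderSeq θ s r
  zero : r 0 = 1
  mem_Icc : ∀ n, r n ∈ Icc ((θ - 1)⁻¹ - 1) 1

theorem Univoque.bracketedOrbit_greedy {β : ℝ} (hu : Univoque β) (hβ : 1 < β) (hβ2 : β < 2) :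
    BracketedOrbit β (greedyDigit β) (greedyRem β) where
  isRemainderSeq := isRemainderSeq_greedy (zero_le_one.trans hβ.le)
  zero := rfl
  mem_Icc n := ⟨hu.inv_sub_one_le_greedyRem hβ hβ2 n, (greedyRem_mem_Icc β n).2⟩

namespace BracketedOrbit

theorem exists_of_tendsto {ι : Type*} {l : Filter ι} [l.NeBot] {β : ι → ℝ} {s : ι → ℕ → ℕ}
    {r : ι → ℕ → ℝ} {θ : ℝ} (h : ∀ i, BracketedOrbit (β i) (s i) (r i))
    (hβ : Tendsto β l (𝓝 θ)) (hθ : 1 < θ) : ∃ s r, BracketedOrbit θ s r := by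
  let u := Ultrafilter.of l
  replace hβ : Tendsto β u (𝓝 θ) := hβ.mono_left (Ultrafilter.of_le l)
  have hbound (n : ℕ) : ∀ᶠ i in u, r i n ∈ Icc (-1) 1 := by
    filter_upwards [hβ.eventually_const_lt hθ] with i hi
    have hinv : 0 < (β i - 1)⁻¹ := inv_pos.2 (sub_pos.2 hi)
    exact ⟨by linarith [((h i).mem_Icc n).1], ((h i).mem_Icc n).2⟩
  have hconv (n : ℕ) : ∃ x, Tendsto (r · n) u (𝓝 x) :=
    let ⟨x, _, hx⟩ := isCompact_Icc.ultrafilter_le_nhds (u.map (r · n))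
      (le_principal_iff.2 (hbound n))
    ⟨x, hx⟩
  choose R hR using hconv
  have hdigit (n : ℕ) : θ * R n - R (n + 1) ∈ range ((↑) : ℕ → ℝ) :=
    Nat.isClosedEmbedding_coe_real.isClosed_range.mem_of_tendsto
      ((hβ.mul (hR n)).sub (hR (n + 1)))
      (.of_forall fun i => ⟨s i n, by rw [(h i).isRemainderSeq n]; ring⟩)
  choose S hS using hdigit
  have hlower : Tendsto (fun i => (β i - 1)⁻¹ - 1) u (𝓝 ((θ - 1)⁻¹ - 1)) :=
    ((hβ.sub_const 1).inv₀ (sub_pos.2 hθ).ne').sub_const 1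
  exact ⟨S, R, {
    isRemainderSeq := fun n => by rw [hS n]; ring
    zero := tendsto_nhds_unique (hR 0) (tendsto_const_nhds.congr fun i => (h i).zero.symm)
    mem_Icc := fun n => ⟨le_of_tendsto_of_tendsto' hlower (hR n) fun i => ((h i).mem_Icc n).1,
      le_of_tendsto' (hR n) fun i => ((h i).mem_Icc n).2⟩ }⟩

variable {θ : ℝ} {s : ℕ → ℕ} {r : ℕ → ℝ}

theorem periodize (h : BracketedOrbit θ s r) {p : ℕ} (hp : 0 < p) (hr : r p = 1) :
    BracketedOrbit θ (fun n => s (n % p)) (fun n => r (n % p)) where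
  isRemainderSeq := h.isRemainderSeq.periodize hp (hr.trans h.zero.symm)
  zero := by rw [Nat.zero_mod, h.zero]
  mem_Icc n := h.mem_Icc (n % p)

theorem shiftSeq_ne (h : BracketedOrbit θ s r) (hθ : 1 < θ) (hr : ∀ n, r (n + 1) < 1) {k : ℕ}
    (hk : 1 ≤ k) : shiftSeq s k ≠ s := by
  intro heq
  have hsum := (h.isRemainderSeq.shift k).hasSum hθ fun n => h.mem_Icc (n + k)
  rw [heq, zero_add] at hsum
  have hone : r k = 1 := (hsum.unique (h.isRemainderSeq.hasSum hθ h.mem_Icc)).trans h.zero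
  exact (hr (k - 1)).ne (by rwa [Nat.sub_add_cancel hk])

variable (hθ : 1 < θ) (hθ2 : θ < 2)
include hθ hθ2

theorem rem_pos (h : BracketedOrbit θ s r) (n : ℕ) : 0 < r n :=
  (sub_pos.2 ((one_lt_inv₀ (sub_pos.2 hθ)).2 (by linarith))).trans_le (h.mem_Icc n).1

theorem digit_le_one (h : BracketedOrbit θ s r) (n : ℕ) : s n ≤ 1 := by
  have hlt : (s n : ℝ) < 2 :=
    calc (s n : ℝ) = θ * r n - r (n + 1) := by rw [h.isRemainderSeq n]; ring
      _ < θ * r n := sub_lt_self _ (h.rem_pos hθ hθ2 (n + 1))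
      _ ≤ θ := mul_le_of_le_one_right (by positivity) (h.mem_Icc n).2
      _ < 2 := hθ2
  exact Nat.lt_succ_iff.1 (mod_cast hlt)

theorem selfBracketed (h : BracketedOrbit θ s r) : selfBracketed s := by
  have hθ0 : 0 ≤ θ := by positivity
  have hshift (k : ℕ) := h.isRemainderSeq.shift k
  refine fun k _ => ⟨?_, ?_⟩
  · refine (h.isRemainderSeq.compl hθ.ne' (h.digit_le_one hθ hθ2)).lexLe_of_le (hshift k) hθ0
      (fun n => ?_) (fun n => (h.mem_Icc _).2) ?_
    · have hinv : 1 < (θ - 1)⁻¹ := (one_lt_inv₀ (sub_pos.2 hθ)).2 (by linarith)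
      linarith [(h.mem_Icc n).2]
    · simpa only [h.zero] using (h.mem_Icc (0 + k)).1
  · refine (hshift k).lexLe_of_le h.isRemainderSeq hθ0 (fun n => h.rem_pos hθ hθ2 _)
      (fun n => (h.mem_Icc n).2) ?_
    simpa only [h.zero] using (h.mem_Icc (0 + k)).2

theorem strictlySelfBracketed (h : BracketedOrbit θ s r) (hr : ∀ n, r (n + 1) < 1) :
    strictlySelfBracketed s := fun k hk => by
  obtain ⟨hlower, hupper⟩ := h.selfBracketed hθ hθ2 k hk
  refine ⟨hlower.resolve_right fun heq => ?_, hupper.resolve_right (h.shiftSeq_ne hθ hr hk)⟩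
  exact h.shiftSeq_ne hθ hr (hk.trans (Nat.le_add_right k k))
    (shiftSeq_add_self_of_eq_complSeq (h.digit_le_one hθ hθ2) heq.symm)

theorem greedyDigit_eq (h : BracketedOrbit θ s r) {m : ℕ} (hr : ∀ n ≤ m, r (n + 1) < 1) :
    greedyDigit θ m = s m :=
  h.isRemainderSeq.greedyDigit_eq (by positivity) h.zero fun n hn =>
    ⟨(h.rem_pos hθ hθ2 _).le, hr n hn⟩

theorem digit_eq_zero (h : BracketedOrbit θ s r) {m : ℕ} (hm : r (m + 1) = 1) : s m = 0 := by
  by_contra hne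
  have hdigit : (1 : ℝ) ≤ s m := mod_cast Nat.one_le_iff_ne_zero.2 hne
  have hle : θ * r m ≤ θ := mul_le_of_le_one_right (by positivity) (h.mem_Icc m).2
  linarith [h.isRemainderSeq m]

theorem mul_greedyRem_eq_one (h : BracketedOrbit θ s r) {m : ℕ} (hm : r (m + 1) = 1)
    (hr : ∀ n < m, r (n + 1) < 1) : θ * greedyRem θ m = 1 := by
  have hstep := h.isRemainderSeq m
  rw [hm, h.digit_eq_zero hθ hθ2 hm, Nat.cast_zero, sub_zero] at hstep
  rw [h.isRemainderSeq.greedyRem_eq h.zero fun n hn => ⟨(h.rem_pos hθ hθ2 _).le, hr n hn⟩, hstep]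

theorem periodicSelfBracketed (h : BracketedOrbit θ s r) {m : ℕ} (hm : r (m + 1) = 1)
    (hr : ∀ n < m, r (n + 1) < 1) :
    periodicSelfBracketed
      (fun n => if n % (m + 1) = m then 0 else greedyDigit θ (n % (m + 1))) := by
  have hdigits (n : ℕ) :
      (if n % (m + 1) = m then 0 else greedyDigit θ (n % (m + 1))) = s (n % (m + 1)) := by
    have hmod : n % (m + 1) ≤ m := Nat.lt_succ_iff.1 (Nat.mod_lt n m.succ_pos)
    split_ifs with heq
    · rw [heq, h.digit_eq_zero hθ hθ2 hm]
    · exact h.greedyDigit_eq hθ hθ2 fun i hi => hr i (hi.trans_lt (hmod.lt_of_ne heq))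
  simp only [hdigits]
  exact ⟨(h.periodize m.succ_pos hm).selfBracketed hθ hθ2, m + 1, Nat.le_add_left 1 m,
    Or.inl (funext fun n => by simp only [shiftSeq, Nat.add_mod_right])⟩

end BracketedOrbit

/-- A limit θ ∈ (1,2) of univoque numbers is univoque (its greedy expansion of 1 is
strictly self-bracketed), or its greedy expansion is finite, d_θ(1) = w10^∞, with
(w0)^∞ periodic self-bracketed. Indexing from 0: digits s 0, s 1, … are s_1, s_2, …. -/
theorem limit_of_univoque (θs : ℕ → ℝ) (hθs : ∀ j, 1 < θs j ∧ θs j < 2 ∧ Univoque (θs j))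
    (θ : ℝ) (h1 : 1 < θ) (h2 : θ < 2)
    (hlim : Filter.Tendsto θs Filter.atTop (nhds θ)) :
    strictlySelfBracketed (greedyDigit θ) ∨
      ∃ m, greedyDigit θ m = 1 ∧ (∀ n, m < n → greedyDigit θ n = 0) ∧
        periodicSelfBracketed (fun n =>
          if n % (m + 1) = m then 0 else greedyDigit θ (n % (m + 1))) := by
  obtain ⟨s, r, h⟩ := BracketedOrbit.exists_of_tendsto
    (fun j => (hθs j).2.2.bracketedOrbit_greedy (hθs j).1 (hθs j).2.1) hlim h1
  have hlt_of_ne {n : ℕ} (hn : r (n + 1) ≠ 1) : r (n + 1) < 1 := (h.mem_Icc _).2.lt_of_ne hn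
  by_cases hreturn : ∃ m, r (m + 1) = 1
  · classical
    obtain ⟨m, hm, hmin⟩ := Nat.findX hreturn
    have hlt : ∀ n < m, r (n + 1) < 1 := fun n hn => hlt_of_ne (hmin n hn)
    have hmul : θ * greedyRem θ m = 1 := h.mul_greedyRem_eq_one h1 h2 hm hlt
    have hzero : greedyRem θ (m + 1) = 0 := by rw [greedyRem, hmul, Int.fract_one]
    refine Or.inr ⟨m, by rw [greedyDigit, hmul, Nat.floor_one], fun n hn => ?_,
      h.periodicSelfBracketed h1 h2 hm hlt⟩
    rw [greedyDigit, greedyRem_eq_zero_of_le hzero hn, mul_zero, Nat.floor_zero]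
  · have hlt (n : ℕ) : r (n + 1) < 1 := hlt_of_ne fun hn => hreturn ⟨n, hn⟩
    have hdigits : greedyDigit θ = s := funext fun m => h.greedyDigit_eq h1 h2 fun n _ => hlt n
    exact Or.inl (hdigits ▸ h.strictlySelfBracketed h1 h2 hlt)
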